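/- Let d be a symmetric design with c_{d22} > 0, let λ0 ∈ ℝ, and let τ0 ∈ ℝ^t with 1_t′τ0 = 0 and τ0 ≠ 0. Then the Fisher information matrix C_{d,τ0,λ0} satisfies: C_{d,τ0,λ0} 1_t = 0; C_{d,τ0,λ0} τ0 = (t−1)⁻¹ (c_{d11} − c_{d12}²/c_{d22}) τ0; and C_{d,τ0,λ0} x = (t−1)⁻¹ (c_{d11} + 2 λ0 c_{d12} + λ0² c_{d22}) x for every x ∈ ℝ^t with 1_t′x = 0 and τ0′x = 0. In particular, regardless of the value of τ0, the eigenvalues of C_{d,τ0,λ0} are 0, (t−1)⁻¹(c_{d11} − c_{d12}²/c_{d22}) and (t−1)⁻¹(c_{d11} + 2λ0 c_{d12} + λ0² c_{d22}) with multiplicities 1, 1 and t−2, respectively. -/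

import Mathlib

open Matrix MeasureTheory
open scoped Classical

noncomputable section

/-- A treatment sequence: assigns a treatment in `Fin t` to each period in `Fin p`. -/
abbrev TrtSeq (p t : ℕ) := Fin p → Fin t

/-- Treatment/period incidence matrix `T_s`. -/
def Tmat {p t : ℕ} (s : TrtSeq p t) : Matrix (Fin p) (Fin t) ℝ :=
  Matrix.of fun k i => if s k = i then 1 else 0

/-- Carryover incidence matrix `F_s`: first row zero, row `k` records the treatment
in period `k-1`. -/
def Fmat {p t : ℕ} (s : TrtSeq p t) : Matrix (Fin p) (Fin t) ℝ :=
  Matrix.of fun k i =>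
    if (k : ℕ) = 0 then 0
    else if s ⟨(k : ℕ) - 1, Nat.lt_of_le_of_lt (Nat.sub_le _ _) k.isLt⟩ = i then 1 else 0

/-- The all-ones `m × m` matrix `J_m`. -/
def Jmat (m : ℕ) : Matrix (Fin m) (Fin m) ℝ := Matrix.of fun _ _ => 1

/-- `B_t = I_t - J_t / t`. -/
def Bmat (t : ℕ) : Matrix (Fin t) (Fin t) ℝ := 1 - ((t : ℝ))⁻¹ • Jmat t

/-- `B̃ = Σ⁻¹ - Σ⁻¹ J_p Σ⁻¹ / (1_p' Σ⁻¹ 1_p)`. -/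
def Btil {p : ℕ} (S : Matrix (Fin p) (Fin p) ℝ) : Matrix (Fin p) (Fin p) ℝ :=
  S⁻¹ - (((fun _ => (1 : ℝ)) : Fin p → ℝ) ⬝ᵥ (S⁻¹ *ᵥ fun _ => (1 : ℝ)))⁻¹ •
    (S⁻¹ * Jmat p * S⁻¹)

/-- `G_1(s) = T_s`, `G_2(s) = F_s`. -/
def Gmat {p t : ℕ} (i : Fin 2) (s : TrtSeq p t) : Matrix (Fin p) (Fin t) ℝ :=
  if i = 0 then Tmat s else Fmat s

/-- An approximate design: nonnegative weights summing to one. -/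
def IsDesign {p t : ℕ} (w : TrtSeq p t → ℝ) : Prop :=
  (∀ s, 0 ≤ w s) ∧ ∑ s : TrtSeq p t, w s = 1

/-- `Ĉ_{sij} = B_t G_i(s)' B̃ G_j(s) B_t`. -/
def Chat {p t : ℕ} (S : Matrix (Fin p) (Fin p) ℝ) (s : TrtSeq p t) (i j : Fin 2) :
    Matrix (Fin t) (Fin t) ℝ :=
  Bmat t * (Gmat i s)ᵀ * Btil S * Gmat j s * Bmat t

/-- `c_{sij} = tr Ĉ_{sij}`. -/
def cseq {p t : ℕ} (S : Matrix (Fin p) (Fin p) ℝ) (s : TrtSeq p t) (i j : Fin 2) : ℝ :=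
  (Chat S s i j).trace

/-- `Ĉ_{dij} = n ∑_s p_s Ĉ_{sij}`. -/
def ChatD {p t : ℕ} (n : ℕ) (S : Matrix (Fin p) (Fin p) ℝ) (w : TrtSeq p t → ℝ)
    (i j : Fin 2) : Matrix (Fin t) (Fin t) ℝ :=
  (n : ℝ) • ∑ s : TrtSeq p t, w s • Chat S s i j

/-- `C_{dij} = Ĉ_{dij} - n (∑_s p_s G_i(s) B_t)' B̃ (∑_s p_s G_j(s) B_t)`. -/
def CD {p t : ℕ} (n : ℕ) (S : Matrix (Fin p) (Fin p) ℝ) (w : TrtSeq p t → ℝ)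
    (i j : Fin 2) : Matrix (Fin t) (Fin t) ℝ :=
  ChatD n S w i j -
    (n : ℝ) • ((∑ s : TrtSeq p t, w s • (Gmat i s * Bmat t))ᵀ * Btil S *
      (∑ s : TrtSeq p t, w s • (Gmat j s * Bmat t)))

/-- `c_{dij} = tr Ĉ_{dij} = n ∑_s p_s c_{sij}`. -/
def cD {p t : ℕ} (n : ℕ) (S : Matrix (Fin p) (Fin p) ℝ) (w : TrtSeq p t → ℝ)
    (i j : Fin 2) : ℝ :=
  (ChatD n S w i j).trace

/-- Fisher information matrix `C_{d,τ0,λ0}` for the direct treatment effects under the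
proportional model. -/
def CInfo {p t : ℕ} (n : ℕ) (S : Matrix (Fin p) (Fin p) ℝ) (w : TrtSeq p t → ℝ)
    (τ0 : Fin t → ℝ) (l0 : ℝ) : Matrix (Fin t) (Fin t) ℝ :=
  CD n S w 0 0 + l0 • (CD n S w 0 1 + CD n S w 1 0) + (l0 ^ 2) • CD n S w 1 1 -
    (τ0 ⬝ᵥ (CD n S w 1 1 *ᵥ τ0))⁻¹ •
      ((CD n S w 0 1 + l0 • CD n S w 1 1) * vecMulVec τ0 τ0 *
        (CD n S w 1 0 + l0 • CD n S w 1 1))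

/-- Permutation matrix `S_σ` with `(S_σ)_{j,i} = 1` iff `i = σ j`. -/
def Smat {t : ℕ} (σ : Equiv.Perm (Fin t)) : Matrix (Fin t) (Fin t) ℝ :=
  Matrix.of fun j i => if i = σ j then 1 else 0

/-- The relabelled sequence `σ ∘ s`. -/
def permSeq {p t : ℕ} (σ : Equiv.Perm (Fin t)) (s : TrtSeq p t) : TrtSeq p t := fun k => σ (s k)

/-- The design `σ d`, with weights `(σd)_s = p_{σ⁻¹ ∘ s}`. -/
def permDesign {p t : ℕ} (σ : Equiv.Perm (Fin t)) (w : TrtSeq p t → ℝ) : TrtSeq p t → ℝ :=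
  fun s => w (permSeq σ⁻¹ s)

/-- A design is symmetric if its weights are invariant under treatment relabelling. -/
def IsSymmetricDesign {p t : ℕ} (w : TrtSeq p t → ℝ) : Prop :=
  ∀ (σ : Equiv.Perm (Fin t)) (s : TrtSeq p t), w (permSeq σ s) = w s

/-- The symmetrized design `d*` with weights `p*_s = (1/t!) ∑_σ p_{σ⁻¹ ∘ s}`. -/
def symmetrize {p t : ℕ} (w : TrtSeq p t → ℝ) : TrtSeq p t → ℝ :=
  fun s => ((Nat.factorial t : ℝ))⁻¹ * ∑ σ : Equiv.Perm (Fin t), permDesign σ w s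

/-- `q_s(x) = c_{s11} + 2 c_{s12} x + c_{s22} x²`. -/
def qSeq {p t : ℕ} (S : Matrix (Fin p) (Fin p) ℝ) (s : TrtSeq p t) (x : ℝ) : ℝ :=
  cseq S s 0 0 + 2 * cseq S s 0 1 * x + cseq S s 1 1 * x ^ 2

/-- `q(x) = max_{s ∈ S} q_s(x)`. -/
def qMax (p t : ℕ) (S : Matrix (Fin p) (Fin p) ℝ) (x : ℝ) : ℝ :=
  sSup (Set.range fun s : TrtSeq p t => qSeq S s x)

/-- `y* = inf_x q(x)`. -/
def yStar (p t : ℕ) (S : Matrix (Fin p) (Fin p) ℝ) : ℝ := ⨅ x : ℝ, qMax p t S x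

/-- `q_d(x) = ∑_s p_s q_s(x)`. -/
def qD {p t : ℕ} (S : Matrix (Fin p) (Fin p) ℝ) (w : TrtSeq p t → ℝ) (x : ℝ) : ℝ :=
  ∑ s : TrtSeq p t, w s * qSeq S s x

/-- `x_d = -c_{d12}/c_{d22}`. -/
def xD {p t : ℕ} (n : ℕ) (S : Matrix (Fin p) (Fin p) ℝ) (w : TrtSeq p t → ℝ) : ℝ :=
  -(cD n S w 0 1) / cD n S w 1 1

/-- An exchangeable prior: a probability measure on `{τ : 1'τ = 0, τ ≠ 0}` that is
invariant under all coordinate permutations of `ℝ^t`. -/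
def IsExchangeablePrior {t : ℕ} (g : Measure (Fin t → ℝ)) : Prop :=
  IsProbabilityMeasure g ∧
    g {τ : Fin t → ℝ | ¬((∑ i, τ i) = 0 ∧ τ ≠ 0)} = 0 ∧
    ∀ σ : Equiv.Perm (Fin t), Measure.map (fun τ i => τ (σ i)) g = g

/-- `m_d(τ0) = min {ℓ' C_{d,τ0,λ0} ℓ : 1'ℓ = 0, ℓ'ℓ = 1}`. -/
def mD {p t : ℕ} (n : ℕ) (S : Matrix (Fin p) (Fin p) ℝ) (w : TrtSeq p t → ℝ) (l0 : ℝ)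
    (τ0 : Fin t → ℝ) : ℝ :=
  sInf {v : ℝ | ∃ l : Fin t → ℝ, (∑ i, l i) = 0 ∧ l ⬝ᵥ l = 1 ∧
    v = l ⬝ᵥ (CInfo n S w τ0 l0 *ᵥ l)}

/-- The E-criterion value `E_{g,λ0}(d) = ∫ m_d(τ0) g(dτ0)`. -/
def Ecrit {p t : ℕ} (n : ℕ) (S : Matrix (Fin p) (Fin p) ℝ) (g : Measure (Fin t → ℝ))
    (l0 : ℝ) (w : TrtSeq p t → ℝ) : ℝ :=
  ∫ τ0, mD n S w l0 τ0 ∂g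

/-- Competing designs for E-optimality: designs with a.e. positive `τ0' C_{d22} τ0`
and `g`-integrable `m_d`. -/
def EAdmissible {p t : ℕ} (n : ℕ) (S : Matrix (Fin p) (Fin p) ℝ) (g : Measure (Fin t → ℝ))
    (l0 : ℝ) (w : TrtSeq p t → ℝ) : Prop :=
  IsDesign w ∧ (∀ᵐ τ0 ∂g, 0 < τ0 ⬝ᵥ (CD n S w 1 1 *ᵥ τ0)) ∧
    Integrable (mD n S w l0) g

/-- `d` is `E_{g,λ0}`-optimal. -/
def EOptimal {p t : ℕ} (n : ℕ) (S : Matrix (Fin p) (Fin p) ℝ) (g : Measure (Fin t → ℝ))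
    (l0 : ℝ) (w : TrtSeq p t → ℝ) : Prop :=
  ∀ w' : TrtSeq p t → ℝ, EAdmissible n S g l0 w' → Ecrit n S g l0 w' ≤ Ecrit n S g l0 w

/-- A pseudo symmetric design: treatments equireplicated in each period,
and all `C_{dij}` completely symmetric. -/
def IsPseudoSymmetric {p t : ℕ} (n : ℕ) (S : Matrix (Fin p) (Fin p) ℝ)
    (w : TrtSeq p t → ℝ) : Prop :=
  (∀ (k : Fin p) (i : Fin t),
    (∑ s ∈ Finset.univ.filter fun s : TrtSeq p t => s k = i, w s) = 1 / (t : ℝ)) ∧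
  ∀ i j : Fin 2, ∃ a b : ℝ, CD n S w i j = a • (1 : Matrix (Fin t) (Fin t) ℝ) + b • Jmat t

/-- Eigenvalues of a (Hermitian) matrix sorted increasingly with multiplicity. -/
def sortedEigs {t : ℕ} (C : Matrix (Fin t) (Fin t) ℝ) : Fin t → ℝ :=
  if h : C.IsHermitian then (fun i => h.eigenvalues (Tuple.sort h.eigenvalues i))
  else fun _ => 0

/-- `Φ_D(C) = (∏_{i=1}^{t-1} a_i)^{1/(t-1)}` (eigenvalues sorted increasingly). -/
def PhiD {t : ℕ} (C : Matrix (Fin t) (Fin t) ℝ) : ℝ :=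
  (∏ i ∈ Finset.univ.filter fun i : Fin t => (i : ℕ) ≠ 0, sortedEigs C i) ^ (((t : ℝ) - 1)⁻¹)

/-- `Φ_A(C) = (t-1)(∑_{i=1}^{t-1} a_i⁻¹)⁻¹` if `a_1 > 0`, else `0`. -/
def PhiA {t : ℕ} (C : Matrix (Fin t) (Fin t) ℝ) : ℝ :=
  if ∀ i : Fin t, (i : ℕ) ≠ 0 → 0 < sortedEigs C i then
    ((t : ℝ) - 1) *
      (∑ i ∈ Finset.univ.filter fun i : Fin t => (i : ℕ) ≠ 0, (sortedEigs C i)⁻¹)⁻¹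
  else 0

/-- `Φ_T(C) = tr(C)/(t-1)`. -/
def PhiT {t : ℕ} (C : Matrix (Fin t) (Fin t) ℝ) : ℝ := C.trace / ((t : ℝ) - 1)

/-- The criterion value `∫ Φ(C_{d,τ0,λ0}) g(dτ0)`. -/
def PhiCrit {p t : ℕ} (n : ℕ) (S : Matrix (Fin p) (Fin p) ℝ)
    (Phi : Matrix (Fin t) (Fin t) ℝ → ℝ) (g : Measure (Fin t → ℝ)) (l0 : ℝ)
    (w : TrtSeq p t → ℝ) : ℝ :=
  ∫ τ0, Phi (CInfo n S w τ0 l0) ∂g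

/-- Competing designs for a `Φ`-criterion. -/
def PhiAdmissible {p t : ℕ} (n : ℕ) (S : Matrix (Fin p) (Fin p) ℝ)
    (Phi : Matrix (Fin t) (Fin t) ℝ → ℝ) (g : Measure (Fin t → ℝ)) (l0 : ℝ)
    (w : TrtSeq p t → ℝ) : Prop :=
  IsDesign w ∧ (∀ᵐ τ0 ∂g, 0 < τ0 ⬝ᵥ (CD n S w 1 1 *ᵥ τ0)) ∧
    Integrable (fun τ0 => Phi (CInfo n S w τ0 l0)) g

/-- `d` is `Φ_{g,λ0}`-optimal. -/
def PhiOptimal {p t : ℕ} (n : ℕ) (S : Matrix (Fin p) (Fin p) ℝ)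
    (Phi : Matrix (Fin t) (Fin t) ℝ → ℝ) (g : Measure (Fin t → ℝ)) (l0 : ℝ)
    (w : TrtSeq p t → ℝ) : Prop :=
  ∀ w' : TrtSeq p t → ℝ, PhiAdmissible n S Phi g l0 w' →
    PhiCrit n S Phi g l0 w' ≤ PhiCrit n S Phi g l0 w

/-- `H_1(s) = F_s`, `H_2(s) = T_s + λ0 F_s` (for estimating `λ`). -/
def Hmat {p t : ℕ} (l0 : ℝ) (i : Fin 2) (s : TrtSeq p t) : Matrix (Fin p) (Fin t) ℝ :=
  if i = 0 then Fmat s else Tmat s + l0 • Fmat s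

/-- `Â_{sij} = B_t H_i(s)' B̃ H_j(s) B_t`. -/
def Ahat {p t : ℕ} (S : Matrix (Fin p) (Fin p) ℝ) (l0 : ℝ) (s : TrtSeq p t) (i j : Fin 2) :
    Matrix (Fin t) (Fin t) ℝ :=
  Bmat t * (Hmat l0 i s)ᵀ * Btil S * Hmat l0 j s * Bmat t

/-- `h_{sij} = tr Â_{sij}`. -/
def hseq {p t : ℕ} (S : Matrix (Fin p) (Fin p) ℝ) (l0 : ℝ) (s : TrtSeq p t) (i j : Fin 2) : ℝ :=
  (Ahat S l0 s i j).trace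

/-- `Â_{dij} = n ∑_s p_s Â_{sij}`. -/
def AhatD {p t : ℕ} (n : ℕ) (S : Matrix (Fin p) (Fin p) ℝ) (l0 : ℝ) (w : TrtSeq p t → ℝ)
    (i j : Fin 2) : Matrix (Fin t) (Fin t) ℝ :=
  (n : ℝ) • ∑ s : TrtSeq p t, w s • Ahat S l0 s i j

/-- `A_{dij} = Â_{dij} - n (∑_s p_s H_i(s) B_t)' B̃ (∑_s p_s H_j(s) B_t)`. -/
def AD {p t : ℕ} (n : ℕ) (S : Matrix (Fin p) (Fin p) ℝ) (l0 : ℝ) (w : TrtSeq p t → ℝ)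
    (i j : Fin 2) : Matrix (Fin t) (Fin t) ℝ :=
  AhatD n S l0 w i j -
    (n : ℝ) • ((∑ s : TrtSeq p t, w s • (Hmat l0 i s * Bmat t))ᵀ * Btil S *
      (∑ s : TrtSeq p t, w s • (Hmat l0 j s * Bmat t)))

/-- `G` is a generalized inverse of `A`. -/
def IsGInv {t : ℕ} (A G : Matrix (Fin t) (Fin t) ℝ) : Prop := A * G * A = A

/-- `A_d(G) = A_{d11} - A_{d12} G A_{d21}` with `A_{d21} = A_{d12}'`. -/
def ADfun {p t : ℕ} (n : ℕ) (S : Matrix (Fin p) (Fin p) ℝ) (l0 : ℝ) (w : TrtSeq p t → ℝ)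
    (G : Matrix (Fin t) (Fin t) ℝ) : Matrix (Fin t) (Fin t) ℝ :=
  AD n S l0 w 0 0 - AD n S l0 w 0 1 * G * (AD n S l0 w 0 1)ᵀ

/-- `r_s(x) = h_{s11} + 2 h_{s12} x + h_{s22} x²`. -/
def rSeq {p t : ℕ} (S : Matrix (Fin p) (Fin p) ℝ) (l0 : ℝ) (s : TrtSeq p t) (x : ℝ) : ℝ :=
  hseq S l0 s 0 0 + 2 * hseq S l0 s 0 1 * x + hseq S l0 s 1 1 * x ^ 2

/-- `r(x) = max_s r_s(x)`. -/
def rMax (p t : ℕ) (S : Matrix (Fin p) (Fin p) ℝ) (l0 : ℝ) (x : ℝ) : ℝ :=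
  sSup (Set.range fun s : TrtSeq p t => rSeq S l0 s x)

/-- `y_0 = inf_x r(x)`. -/
def yZero (p t : ℕ) (S : Matrix (Fin p) (Fin p) ℝ) (l0 : ℝ) : ℝ := ⨅ x : ℝ, rMax p t S l0 x

/-!
Since `d` is symmetric, `∑ₛ pₛ Gᵢ(s)` has constant rows, so it is annihilated by `B_t` and the
correction term of `C_{dij}` vanishes. The remaining middle factor `∑ₛ pₛ Gᵢ(s)' B̃ Gⱼ(s)` is
invariant under simultaneous permutation of rows and columns, hence of the form `a I + b J`; as
`J B_t = 0`, this makes `C_{dij}` a multiple of the projection `B_t`, with the multiple determined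
by the trace. Thus `C_{d,τ0,λ0}` is a linear combination of `B_t` and of `τ0 τ0'`, whose joint
eigenvectors are the vectors `1`, `τ0` and those orthogonal to both.
-/

lemma exists_eq_smul_one_add_smul_of_perm_invariant {ι R : Type*} [DecidableEq ι] [Ring R]
    (N : Matrix ι ι R) (hN : ∀ (σ : Equiv.Perm ι) a b, N (σ a) (σ b) = N a b) :
    ∃ x y : R, N = x • (1 : Matrix ι ι R) + y • Matrix.of fun _ _ => 1 := by
  have transitive₁ : ∀ a b : ι, ∃ σ : Equiv.Perm ι, σ a = b :=
    MulAction.exists_smul_eq (Equiv.Perm ι)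
  have transitive₂ : ∀ {a b c d : ι}, a ≠ b → c ≠ d → ∃ σ : Equiv.Perm ι, σ a = c ∧ σ b = d :=
    MulAction.is_two_pretransitive_iff.mp (Equiv.Perm.isMultiplyPretransitive ι 2)
  suffices ∃ x y : R, ∀ a b, N a b = if a = b then x + y else y by
    obtain ⟨x, y, h⟩ := this
    refine ⟨x, y, ?_⟩
    ext a b
    by_cases hab : a = b <;> simp [h, hab]
  rcases subsingleton_or_nontrivial ι with hι | ⟨a₀, b₀, h₀⟩
  · rcases isEmpty_or_nonempty ι with _ | ⟨⟨a₀⟩⟩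
    · exact ⟨0, 0, fun a => isEmptyElim a⟩
    · exact ⟨N a₀ a₀, 0, fun a b => by simp [Subsingleton.elim a a₀, Subsingleton.elim b a₀]⟩
  · refine ⟨N a₀ a₀ - N a₀ b₀, N a₀ b₀, fun a b => ?_⟩
    split_ifs with hab
    · obtain ⟨σ, rfl⟩ := transitive₁ a₀ a
      rw [← hab, hN, sub_add_cancel]
    · obtain ⟨σ, rfl, rfl⟩ := transitive₂ h₀ hab
      exact hN σ a₀ b₀

section Centering

lemma Jmat_isSymm (m : ℕ) : (Jmat m).IsSymm := rfl

lemma Bmat_isSymm (t : ℕ) : (Bmat t).IsSymm :=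
  Matrix.isSymm_one.sub ((Jmat_isSymm t).smul _)

lemma Bmat_mulVec_one (t : ℕ) : Bmat t *ᵥ (fun _ => (1 : ℝ)) = 0 := by
  ext i
  have ht : (t : ℝ) ≠ 0 := Nat.cast_ne_zero.mpr (Fin.pos i).ne'
  simp [Bmat, Jmat, Matrix.mulVec, dotProduct, Matrix.one_apply, ht]

lemma Bmat_mulVec_of_sum_eq_zero {t : ℕ} {x : Fin t → ℝ} (hx : ∑ i, x i = 0) :
    Bmat t *ᵥ x = x := by
  have hJ : Jmat t *ᵥ x = 0 := by
    ext i
    simp [Jmat, Matrix.mulVec, dotProduct, hx]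
  simp [Bmat, Matrix.sub_mulVec, Matrix.smul_mulVec, hJ]

lemma mul_Bmat_eq_zero_of_rows_constant {m : Type*} {t : ℕ} {M : Matrix m (Fin t) ℝ}
    (hM : ∀ k a b, M k a = M k b) : M * Bmat t = 0 := by
  have column_sum : ∀ b, ∑ a, Bmat t a b = 0 := fun b => by
    simpa [Matrix.mulVec, dotProduct, (Bmat_isSymm t).apply] using congrFun (Bmat_mulVec_one t) b
  ext k b
  simp only [Matrix.mul_apply, hM k _ b, ← Finset.mul_sum, column_sum, mul_zero, Matrix.zero_apply]

lemma Jmat_mul_Bmat (t : ℕ) : Jmat t * Bmat t = 0 :=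
  mul_Bmat_eq_zero_of_rows_constant fun _ _ _ => rfl

lemma Bmat_mul_Bmat (t : ℕ) : Bmat t * Bmat t = Bmat t := by
  conv_lhs => enter [1]; rw [Bmat]
  rw [Matrix.sub_mul, Matrix.smul_mul, Jmat_mul_Bmat, Matrix.one_mul, smul_zero, sub_zero]

lemma trace_Bmat {t : ℕ} (ht : t ≠ 0) : (Bmat t).trace = (t : ℝ) - 1 := by
  simp [Bmat, Jmat, Matrix.trace, ht]

lemma exists_Bmat_mul_mul_Bmat_eq_smul {t : ℕ} (N : Matrix (Fin t) (Fin t) ℝ)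
    (hN : ∀ (σ : Equiv.Perm (Fin t)) a b, N (σ a) (σ b) = N a b) :
    ∃ a : ℝ, Bmat t * N * Bmat t = a • Bmat t := by
  obtain ⟨x, y, hxy⟩ := exists_eq_smul_one_add_smul_of_perm_invariant N hN
  have hN_mul : N * Bmat t = x • Bmat t := by
    rw [hxy, ← Jmat, Matrix.add_mul, Matrix.smul_mul, Matrix.smul_mul, Jmat_mul_Bmat,
      Matrix.one_mul, smul_zero, add_zero]
  exact ⟨x, by rw [Matrix.mul_assoc, hN_mul, Matrix.mul_smul, Bmat_mul_Bmat]⟩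

lemma Btil_isSymm {p : ℕ} {S : Matrix (Fin p) (Fin p) ℝ} (hS : S.IsSymm) : (Btil S).IsSymm := by
  simp [Matrix.IsSymm, Btil, Matrix.transpose_nonsing_inv, hS.eq, (Jmat_isSymm p).eq,
    Matrix.mul_assoc]

end Centering

section SymmetricDesign

variable {p t : ℕ} {w : TrtSeq p t → ℝ}

lemma Gmat_permSeq_apply (i : Fin 2) (σ : Equiv.Perm (Fin t)) (s : TrtSeq p t) (k : Fin p)
    (a : Fin t) : Gmat i (permSeq σ s) k (σ a) = Gmat i s k a := by
  unfold Gmat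
  split_ifs <;> simp [Tmat, Fmat, permSeq]

lemma IsSymmetricDesign.sum_smul_eq {E : Type*} [AddCommMonoid E] [Module ℝ E]
    (hw : IsSymmetricDesign w) (σ : Equiv.Perm (Fin t)) {f g : TrtSeq p t → E}
    (hfg : ∀ s, f (permSeq σ s) = g s) : ∑ s, w s • f s = ∑ s, w s • g s := by
  calc ∑ s, w s • f s = ∑ s, w (permSeq σ s) • f (permSeq σ s) :=
        (Equiv.sum_comp ((Equiv.refl (Fin p)).arrowCongr σ) fun s => w s • f s).symm
    _ = ∑ s, w s • g s := by simp only [hw σ, hfg]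

lemma IsSymmetricDesign.sum_smul_Gmat_mul_Bmat (hw : IsSymmetricDesign w) (i : Fin 2) :
    ∑ s, w s • (Gmat i s * Bmat t) = 0 := by
  have rows_constant : ∀ k a b, (∑ s, w s • Gmat i s) k a = (∑ s, w s • Gmat i s) k b := by
    intro k a b
    simp only [Matrix.sum_apply, Matrix.smul_apply]
    refine hw.sum_smul_eq (Equiv.swap a b) fun s => ?_
    simpa using Gmat_permSeq_apply i (Equiv.swap a b) s k b
  simpa only [Matrix.sum_mul, Matrix.smul_mul] using
    mul_Bmat_eq_zero_of_rows_constant rows_constant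

variable (n : ℕ) (S : Matrix (Fin p) (Fin p) ℝ)

lemma ChatD_eq_Bmat_mul_mul_Bmat (w : TrtSeq p t → ℝ) (i j : Fin 2) :
    ChatD n S w i j =
      (n : ℝ) • (Bmat t * (∑ s, w s • ((Gmat i s)ᵀ * Btil S * Gmat j s)) * Bmat t) := by
  simp only [ChatD, Chat, Matrix.mul_sum, Matrix.sum_mul, Matrix.mul_smul, Matrix.smul_mul,
    Matrix.mul_assoc]

lemma IsSymmetricDesign.exists_ChatD_eq_smul_Bmat (hw : IsSymmetricDesign w) (i j : Fin 2) :
    ∃ a : ℝ, ChatD n S w i j = a • Bmat t := by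
  obtain ⟨a, ha⟩ := exists_Bmat_mul_mul_Bmat_eq_smul
    (∑ s, w s • ((Gmat i s)ᵀ * Btil S * Gmat j s)) fun σ a b => by
      simp only [Matrix.sum_apply, Matrix.smul_apply]
      refine hw.sum_smul_eq σ fun s => ?_
      simp only [Matrix.mul_apply, Matrix.transpose_apply, Gmat_permSeq_apply]
  exact ⟨n * a, by rw [ChatD_eq_Bmat_mul_mul_Bmat, ha, smul_smul]⟩

lemma IsSymmetricDesign.CD_eq_smul_Bmat (hw : IsSymmetricDesign w) (ht : 1 < t) (i j : Fin 2) :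
    CD n S w i j = (((t : ℝ) - 1)⁻¹ * cD n S w i j) • Bmat t := by
  have ht' : (t : ℝ) - 1 ≠ 0 := (sub_pos.mpr (Nat.one_lt_cast.mpr ht)).ne'
  obtain ⟨a, ha⟩ := hw.exists_ChatD_eq_smul_Bmat n S i j
  have trace_eq : cD n S w i j = a * ((t : ℝ) - 1) := by
    rw [cD, ha, Matrix.trace_smul, trace_Bmat (by lia), smul_eq_mul]
  rw [CD, hw.sum_smul_Gmat_mul_Bmat j, Matrix.mul_zero, smul_zero, sub_zero, ha, trace_eq]
  congr 1
  field_simp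

variable {S}

lemma cD_comm (hS : S.IsSymm) (w : TrtSeq p t → ℝ) (i j : Fin 2) :
    cD n S w i j = cD n S w j i := by
  have hChat : ∀ s : TrtSeq p t, (Chat S s i j)ᵀ = Chat S s j i := fun s => by
    simp only [Chat, Matrix.transpose_mul, Matrix.transpose_transpose, (Bmat_isSymm t).eq,
      (Btil_isSymm hS).eq, Matrix.mul_assoc]
  rw [cD, ← Matrix.trace_transpose]
  simp only [cD, ChatD, Matrix.transpose_smul, Matrix.transpose_sum, hChat]

lemma IsSymmetricDesign.CInfo_eq_smul_Bmat_sub_vecMulVec (hS : S.IsSymm)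
    (hw : IsSymmetricDesign w) (ht : 1 < t) (l0 : ℝ) {τ0 : Fin t → ℝ} (hτsum : ∑ i, τ0 i = 0) :
    CInfo n S w τ0 l0 = ((t : ℝ) - 1)⁻¹ •
      ((cD n S w 0 0 + 2 * l0 * cD n S w 0 1 + l0 ^ 2 * cD n S w 1 1) • Bmat t -
        ((cD n S w 0 1 + l0 * cD n S w 1 1) ^ 2 / cD n S w 1 1 / (τ0 ⬝ᵥ τ0)) •
          vecMulVec τ0 τ0) := by
  have ht' : (t : ℝ) - 1 ≠ 0 := (sub_pos.mpr (Nat.one_lt_cast.mpr ht)).ne'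
  have hBτ : Bmat t *ᵥ τ0 = τ0 := Bmat_mulVec_of_sum_eq_zero hτsum
  have hτB : τ0 ᵥ* Bmat t = τ0 := by rw [← Matrix.mulVec_transpose, (Bmat_isSymm t).eq, hBτ]
  have sandwich : Bmat t * vecMulVec τ0 τ0 * Bmat t = vecMulVec τ0 τ0 := by
    rw [Matrix.mul_vecMulVec, Matrix.vecMulVec_mul, hBτ, hτB]
  simp only [CInfo, hw.CD_eq_smul_Bmat n S ht, cD_comm n hS w 1 0, smul_smul, ← add_smul,
    Matrix.smul_mul, Matrix.mul_smul, sandwich, Matrix.smul_mulVec, hBτ, dotProduct_smul,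
    smul_sub, smul_eq_mul]
  congr 2
  · ring
  · field_simp

end SymmetricDesign

lemma one_lt_of_sum_eq_zero_of_ne_zero {t : ℕ} {x : Fin t → ℝ} (hsum : ∑ i, x i = 0)
    (hx : x ≠ 0) : 1 < t := by
  by_contra! ht
  have : Subsingleton (Fin t) := Fin.subsingleton_iff_le_one.mpr ht
  exact hx <| funext fun i => by rwa [Fintype.sum_subsingleton x i] at hsum

theorem stmt5_general {p t n : ℕ} {S : Matrix (Fin p) (Fin p) ℝ} (hS : S.IsSymm)
    {w : TrtSeq p t → ℝ} (hsym : IsSymmetricDesign w) (hc22 : cD n S w 1 1 ≠ 0) (l0 : ℝ)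
    {τ0 : Fin t → ℝ} (hτsum : ∑ i, τ0 i = 0) (hτ0 : τ0 ≠ 0) :
    (CInfo n S w τ0 l0 *ᵥ fun _ => (1 : ℝ)) = 0 ∧
    CInfo n S w τ0 l0 *ᵥ τ0 =
      (((t : ℝ) - 1)⁻¹ * (cD n S w 0 0 - (cD n S w 0 1) ^ 2 / cD n S w 1 1)) • τ0 ∧
    ∀ x : Fin t → ℝ, (∑ i, x i) = 0 → τ0 ⬝ᵥ x = 0 →
      CInfo n S w τ0 l0 *ᵥ x =
        (((t : ℝ) - 1)⁻¹ *
          (cD n S w 0 0 + 2 * l0 * cD n S w 0 1 + l0 ^ 2 * cD n S w 1 1)) • x := by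
  have hττ : τ0 ⬝ᵥ τ0 ≠ 0 := dotProduct_self_eq_zero.not.mpr hτ0
  have hτ1 : (τ0 ⬝ᵥ fun _ => (1 : ℝ)) = 0 := by simpa [dotProduct] using hτsum
  have ht : 1 < t := one_lt_of_sum_eq_zero_of_ne_zero hτsum hτ0
  simp only [hsym.CInfo_eq_smul_Bmat_sub_vecMulVec n hS ht l0 hτsum,
    Matrix.smul_mulVec, Matrix.sub_mulVec, vecMulVec_mulVec, op_smul_eq_smul]
  refine ⟨?_, ?_, fun x hx hτx => ?_⟩
  · simp [Bmat_mulVec_one, hτ1]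
  · rw [Bmat_mulVec_of_sum_eq_zero hτsum, smul_smul, ← sub_smul, smul_smul]
    congr 2
    field_simp
    ring
  · simp [Bmat_mulVec_of_sum_eq_zero hx, hτx, smul_smul]

/-- eigenstructure of the Fisher information matrix of a symmetric design. -/
theorem stmt5 (p t n : ℕ) (hp : 2 ≤ p) (ht : 3 ≤ t) (hn : 1 ≤ n)
    (S : Matrix (Fin p) (Fin p) ℝ) (hS : S.PosDef)
    (w : TrtSeq p t → ℝ) (hw : IsDesign w) (hsym : IsSymmetricDesign w)
    (hc22 : 0 < cD n S w 1 1) (l0 : ℝ)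
    (τ0 : Fin t → ℝ) (hτsum : (∑ i, τ0 i) = 0) (hτ0 : τ0 ≠ 0) :
    (CInfo n S w τ0 l0 *ᵥ fun _ => (1 : ℝ)) = 0 ∧
    CInfo n S w τ0 l0 *ᵥ τ0 =
      (((t : ℝ) - 1)⁻¹ * (cD n S w 0 0 - (cD n S w 0 1) ^ 2 / cD n S w 1 1)) • τ0 ∧
    ∀ x : Fin t → ℝ, (∑ i, x i) = 0 → τ0 ⬝ᵥ x = 0 →
      CInfo n S w τ0 l0 *ᵥ x =
        (((t : ℝ) - 1)⁻¹ *
          (cD n S w 0 0 + 2 * l0 * cD n S w 0 1 + l0 ^ 2 * cD n S w 1 1)) • x :=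
  stmt5_general (isHermitian_iff_isSymm.mp hS.isHermitian) hsym hc22.ne' l0 hτsum hτ0
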